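/- arXiv:2007.12576 — 2 statements merged into one kernel-verified Lean document; each statement's English description precedes it below -/
import Mathlib

section
/- Let α ∈ (1,∞), let ρ be a positive semidefinite complex matrix and σ a positive definite complex matrix of the same size. Then: (i) the matrix A₀ := ‖σ^(−1/2) ρ σ^(−1/2)‖_∞^(α−1) · ρ satisfies ρ ≤ σ #_{1/α} A₀, so the feasible set { A PSD : ρ ≤ σ #_{1/α} A } is nonempty and Q^#_α(ρ‖σ) ≤ ‖σ^(−1/2) ρ σ^(−1/2)‖_∞^(α−1) · tr(ρ); (ii) the infimum defining Q^#_α(ρ‖σ) is attained at some PSD matrix A satisfying A ≤ ‖σ^(−1/2) ρ σ^(−1/2)‖_∞^(α−1) · tr(ρ) · I. Here ‖·‖_∞ denotes the operator norm. -/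
open Matrix Filter
open scoped Kronecker Classical ComplexOrder

noncomputable def Matrix.rpowH {n : Type*} [Fintype n] [DecidableEq n]
    (A : Matrix n n ℂ) (r : ℝ) : Matrix n n ℂ :=
  if hA : A.IsHermitian then
    (hA.eigenvectorUnitary : Matrix n n ℂ) *
      Matrix.diagonal (fun i => ((hA.eigenvalues i ^ r : ℝ) : ℂ)) *
      star (hA.eigenvectorUnitary : Matrix n n ℂ)
  else 0

noncomputable def Matrix.gmean {n : Type*} [Fintype n] [DecidableEq n]
    (β : ℝ) (S A : Matrix n n ℂ) : Matrix n n ℂ :=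
  S.rpowH (1/2) * ((S.rpowH (-(1/2)) * A * S.rpowH (-(1/2))).rpowH β) * S.rpowH (1/2)

noncomputable def QSharp {n : Type*} [Fintype n] [DecidableEq n]
    (α : ℝ) (ρ σ : Matrix n n ℂ) : ℝ :=
  sInf { t : ℝ | ∃ A : Matrix n n ℂ, A.PosSemidef ∧
    (Matrix.gmean (1/α) σ A - ρ).PosSemidef ∧ t = A.trace.re }

noncomputable def DSharp {n : Type*} [Fintype n] [DecidableEq n]
    (α : ℝ) (ρ σ : Matrix n n ℂ) : ℝ :=
  1/(α-1) * Real.logb 2 (QSharp α ρ σ)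

noncomputable def opNorm {n : Type*} [Fintype n] [DecidableEq n] (A : Matrix n n ℂ) : ℝ :=
  ‖(Matrix.toEuclideanCLM (𝕜 := ℂ) A : EuclideanSpace ℂ n →L[ℂ] EuclideanSpace ℂ n)‖

noncomputable def Dtilde {n : Type*} [Fintype n] [DecidableEq n]
    (α : ℝ) (ρ σ : Matrix n n ℂ) : ℝ :=
  1/(α-1) * Real.logb 2
    (((σ.rpowH ((1-α)/(2*α)) * ρ * σ.rpowH ((1-α)/(2*α))).rpowH α).trace.re)

noncomputable def Dhat {n : Type*} [Fintype n] [DecidableEq n]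
    (α : ℝ) (ρ σ : Matrix n n ℂ) : ℝ :=
  1/(α-1) * Real.logb 2
    ((σ.rpowH (1/2) * ((σ.rpowH (-(1/2)) * ρ * σ.rpowH (-(1/2))).rpowH α) * σ.rpowH (1/2)).trace.re)

/-! Compression by `σ ^ (-1/2)` turns `ρ ≤ σ #_{1/α} A` into `X ≤ Y ^ (1/α)`, where
`X = σ ^ (-1/2) ρ σ ^ (-1/2)` and `Y = σ ^ (-1/2) A σ ^ (-1/2)`. On the spectrum of `X` we have
`x ^ α ≤ ‖X‖ ^ (α - 1) * x`, so `X ^ α ≤ ‖X‖ ^ (α - 1) • X`, and operator monotonicity of the power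
`1/α` gives feasibility of `‖X‖ ^ (α - 1) • ρ`. The infimum is attained because the feasible set is
closed and the trace is coercive on the positive semidefinite cone, by `‖A‖ ≤ tr A`. The same
comparison `A ≤ (tr A) • 1` at a minimizer bounds it by the trace of any feasible point. -/

section CStarAlgebra

variable {𝒜 : Type*} [CStarAlgebra 𝒜] [PartialOrder 𝒜] [StarOrderedRing 𝒜] {a : 𝒜} {α : ℝ}

lemma rpow_le_norm_rpow_sub_one_smul (ha : 0 ≤ a) (hα : 1 ≤ α) :
    a ^ α ≤ ‖a‖ ^ (α - 1) • a := by
  have hcont : Continuous fun x : ℝ => x ^ α := Real.continuous_rpow_const (by linarith)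
  rw [CFC.rpow_eq_cfc_real, ← cfc_const_mul_id (‖a‖ ^ (α - 1)) a]
  refine cfc_mono (fun x hx => ?_) hcont.continuousOn (by fun_prop)
  have hx0 : 0 ≤ x := spectrum_nonneg_of_nonneg ha hx
  have hx1 : x ≤ ‖a‖ := (le_algebraMap_iff_spectrum_le ha.isSelfAdjoint).1
    ha.isSelfAdjoint.le_algebraMap_norm_self x hx
  calc x ^ α = x ^ (α - 1) * x := by
        rw [← Real.rpow_add_one' hx0 (by linarith), sub_add_cancel]
    _ ≤ ‖a‖ ^ (α - 1) * x := by gcongr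

lemma le_norm_rpow_sub_one_smul_rpow (ha : 0 ≤ a) (hα : 1 ≤ α) :
    a ≤ (‖a‖ ^ (α - 1) • a) ^ (1 / α) :=
  have hα0 : 0 < α := by linarith
  calc a = (a ^ α) ^ (1 / α) := by
        rw [CFC.rpow_rpow_of_exponent_nonneg a _ _ hα0.le (by positivity),
          mul_one_div_cancel hα0.ne', CFC.rpow_one a]
    _ ≤ (‖a‖ ^ (α - 1) • a) ^ (1 / α) :=
        CFC.rpow_le_rpow ⟨by positivity, (div_le_one hα0).2 hα⟩
          (rpow_le_norm_rpow_sub_one_smul ha hα)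

lemma continuousOn_rpow_of_nonneg {r : ℝ} (hr : 0 ≤ r) :
    ContinuousOn (fun a : 𝒜 => a ^ r) (Set.Ici 0) :=
  continuousOn_id.cfc_nnreal_of_mem_nhdsSet _ univ_mem (hf := by
    exact (NNReal.continuous_rpow_const hr).continuousOn)

end CStarAlgebra

open scoped MatrixOrder Matrix.Norms.L2Operator

section Trace

variable {n : Type*} [Fintype n]

lemma re_trace_nonneg {𝕜 : Type*} [RCLike 𝕜] {A : Matrix n n 𝕜} (hA : 0 ≤ A) :
    0 ≤ RCLike.re A.trace :=
  (RCLike.nonneg_iff.1 (nonneg_iff_posSemidef.1 hA).trace_nonneg).1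

lemma le_re_trace_smul_one [DecidableEq n] {𝕜 : Type*} [RCLike 𝕜] {A : Matrix n n 𝕜} (hA : 0 ≤ A) :
    A ≤ RCLike.re A.trace • (1 : Matrix n n 𝕜) := by
  have hA' : A.PosSemidef := nonneg_iff_posSemidef.1 hA
  have htrace : RCLike.re A.trace = ∑ i, hA'.1.eigenvalues i := by
    simp [hA'.1.trace_eq_sum_eigenvalues]
  rw [← Algebra.algebraMap_eq_smul_one, le_algebraMap_iff_spectrum_le hA'.1.isSelfAdjoint,
    hA'.1.spectrum_real_eq_range_eigenvalues, Set.forall_mem_range, htrace]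
  exact fun i => Finset.single_le_sum (fun j _ => hA'.eigenvalues_nonneg j) (Finset.mem_univ i)

lemma norm_le_re_trace [DecidableEq n] {A : Matrix n n ℂ} (hA : 0 ≤ A) : ‖A‖ ≤ A.trace.re := by
  have htrace : 0 ≤ A.trace.re := re_trace_nonneg hA
  rw [CStarAlgebra.norm_le_iff_le_algebraMap A htrace, Algebra.algebraMap_eq_smul_one]
  exact le_re_trace_smul_one hA

lemma exists_isMinOn_re_trace {F : Set (Matrix n n ℂ)} (hF : IsClosed F) (hne : F.Nonempty)
    (hnonneg : ∀ A ∈ F, 0 ≤ A) : ∃ A ∈ F, IsMinOn (fun B => B.trace.re) F A := by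
  classical
  obtain ⟨A₀, hA₀⟩ := hne
  have : ProperSpace (Matrix n n ℂ) := FiniteDimensional.proper ℂ _
  have hcont : Continuous fun B : Matrix n n ℂ => B.trace.re := by fun_prop
  refine hcont.continuousOn.exists_isMinOn' hF hA₀ ?_
  filter_upwards [mem_inf_of_left (tendsto_norm_cocompact_atTop.eventually_ge_atTop A₀.trace.re),
    mem_inf_of_right (mem_principal_self F)] with B hB hBF
  exact hB.trans (norm_le_re_trace (hnonneg B hBF))

end Trace

section GeometricMean

variable {n : Type*} [Fintype n] [DecidableEq n] {A ρ σ : Matrix n n ℂ} {β : ℝ}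

lemma opNorm_eq_norm (A : Matrix n n ℂ) : opNorm A = ‖A‖ :=
  rfl

lemma rpowH_eq_rpow (hA : 0 ≤ A) (r : ℝ) : A.rpowH r = A ^ r := by
  have hA' : A.IsHermitian := hA.isSelfAdjoint
  rw [CFC.rpow_eq_cfc_real, hA'.cfc_eq, rpowH, dif_pos hA', IsHermitian.cfc,
    Unitary.conjStarAlgAut_apply]
  rfl

lemma gmean_eq_rpow (hσ : 0 ≤ σ) (hA : 0 ≤ A) (β : ℝ) :
    gmean β σ A =
      σ ^ (1 / 2 : ℝ) * (σ ^ (-(1 / 2) : ℝ) * A * σ ^ (-(1 / 2) : ℝ)) ^ β * σ ^ (1 / 2 : ℝ) := by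
  rw [gmean, rpowH_eq_rpow hσ, rpowH_eq_rpow hσ,
    rpowH_eq_rpow (conjugate_nonneg_of_nonneg hA CFC.rpow_nonneg)]

lemma continuousOn_gmean (hσ : 0 ≤ σ) (hβ : 0 ≤ β) : ContinuousOn (gmean β σ) (Set.Ici 0) := by
  refine ContinuousOn.congr ?_ fun A hA => gmean_eq_rpow hσ hA β
  have hconj : ContinuousOn
      (fun A => (σ ^ (-(1 / 2) : ℝ) * A * σ ^ (-(1 / 2) : ℝ)) ^ β) (Set.Ici 0) :=
    (continuousOn_rpow_of_nonneg hβ).comp (by fun_prop)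
      fun A hA => Set.mem_Ici.2 (conjugate_nonneg_of_nonneg hA CFC.rpow_nonneg)
  fun_prop

lemma le_gmean_of_conj_le_rpow (hσ : σ.PosDef) (hA : 0 ≤ A)
    (h : σ ^ (-(1 / 2) : ℝ) * ρ * σ ^ (-(1 / 2) : ℝ) ≤
      (σ ^ (-(1 / 2) : ℝ) * A * σ ^ (-(1 / 2) : ℝ)) ^ β) :
    ρ ≤ gmean β σ A := by
  have hσ' : IsStrictlyPositive σ := isStrictlyPositive_iff_posDef.2 hσ
  calc ρ = (σ ^ (1 / 2 : ℝ) * σ ^ (-(1 / 2) : ℝ)) * ρ *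
        (σ ^ (-(1 / 2) : ℝ) * σ ^ (1 / 2 : ℝ)) := by
        rw [CFC.rpow_mul_rpow_neg, CFC.rpow_neg_mul_rpow, one_mul, mul_one]
    _ = σ ^ (1 / 2 : ℝ) * (σ ^ (-(1 / 2) : ℝ) * ρ * σ ^ (-(1 / 2) : ℝ)) * σ ^ (1 / 2 : ℝ) := by
        simp only [mul_assoc]
    _ ≤ σ ^ (1 / 2 : ℝ) * (σ ^ (-(1 / 2) : ℝ) * A * σ ^ (-(1 / 2) : ℝ)) ^ β *
        σ ^ (1 / 2 : ℝ) := conjugate_le_conjugate_of_nonneg h CFC.rpow_nonneg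
    _ = gmean β σ A := (gmean_eq_rpow hσ'.nonneg hA β).symm

end GeometricMean

namespace QSharp

variable {n : Type*} [Fintype n] [DecidableEq n] {A ρ σ : Matrix n n ℂ} {α : ℝ}

/-- The feasible set `{A ≥ 0 | ρ ≤ σ #_{1/α} A}` of the convex program defining `QSharp α ρ σ`,
written with the Loewner order. -/
def feasibleSet (α : ℝ) (ρ σ : Matrix n n ℂ) : Set (Matrix n n ℂ) :=
  {A | 0 ≤ A ∧ ρ ≤ gmean (1 / α) σ A}

lemma eq_sInf_image_feasibleSet (α : ℝ) (ρ σ : Matrix n n ℂ) :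
    QSharp α ρ σ = sInf ((fun A => A.trace.re) '' feasibleSet α ρ σ) := by
  simp only [QSharp, feasibleSet, Set.image, Set.mem_ofPred_eq, and_assoc, eq_comm,
    ← nonneg_iff_posSemidef, sub_nonneg]

lemma isClosed_feasibleSet (hσ : 0 ≤ σ) (hα : 0 ≤ α) : IsClosed (feasibleSet α ρ σ) :=
  (continuousOn_gmean hσ (one_div_nonneg.2 hα)).preimage_isClosed_of_isClosed
    isClosed_Ici isClosed_Ici

lemma le_re_trace (hA : A ∈ feasibleSet α ρ σ) : QSharp α ρ σ ≤ A.trace.re := by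
  rw [eq_sInf_image_feasibleSet]
  exact csInf_le ⟨0, Set.forall_mem_image.2 fun B hB => re_trace_nonneg hB.1⟩
    (Set.mem_image_of_mem _ hA)

lemma exists_mem_feasibleSet_re_trace_eq (hσ : 0 ≤ σ) (hα : 0 ≤ α)
    (hne : (feasibleSet α ρ σ).Nonempty) : ∃ A ∈ feasibleSet α ρ σ, A.trace.re = QSharp α ρ σ := by
  obtain ⟨A, hA, hmin⟩ :=
    exists_isMinOn_re_trace (isClosed_feasibleSet hσ hα) hne fun B hB => hB.1
  have hleast : IsLeast ((fun B => B.trace.re) '' feasibleSet α ρ σ) A.trace.re :=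
    ⟨Set.mem_image_of_mem _ hA, Set.forall_mem_image.2 (isMinOn_iff.1 hmin)⟩
  exact ⟨A, hA, hleast.csInf_eq.symm.trans (eq_sInf_image_feasibleSet α ρ σ).symm⟩

lemma opNorm_rpow_smul_mem_feasibleSet (hρ : 0 ≤ ρ) (hσ : σ.PosDef) (hα : 1 ≤ α) :
    opNorm (σ.rpowH (-(1 / 2)) * ρ * σ.rpowH (-(1 / 2))) ^ (α - 1) • ρ ∈ feasibleSet α ρ σ := by
  have hX : 0 ≤ σ ^ (-(1 / 2) : ℝ) * ρ * σ ^ (-(1 / 2) : ℝ) :=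
    conjugate_nonneg_of_nonneg hρ CFC.rpow_nonneg
  have hnonneg : 0 ≤ ‖σ ^ (-(1 / 2) : ℝ) * ρ * σ ^ (-(1 / 2) : ℝ)‖ ^ (α - 1) • ρ :=
    smul_nonneg (by positivity) hρ
  rw [opNorm_eq_norm, rpowH_eq_rpow (nonneg_iff_posSemidef.2 hσ.posSemidef)]
  refine ⟨hnonneg, le_gmean_of_conj_le_rpow hσ hnonneg ?_⟩
  rw [mul_smul_comm, smul_mul_assoc]
  exact le_norm_rpow_sub_one_smul_rpow hX hα

end QSharp

/-- feasibility and attainment for the convex program defining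
Q^#_α(ρ‖σ). -/
theorem QSharp_feasible_and_attained
    {n : Type*} [Fintype n] [DecidableEq n]
    (α : ℝ) (hα : 1 < α)
    (ρ σ : Matrix n n ℂ) (hρ : ρ.PosSemidef) (hσ : σ.PosDef) :
    -- (i) A₀ := ‖σ^(−1/2) ρ σ^(−1/2)‖_∞^(α−1) • ρ is feasible
    (Matrix.gmean (1/α) σ
        (((opNorm (σ.rpowH (-(1/2)) * ρ * σ.rpowH (-(1/2))) ^ (α-1) : ℝ) : ℂ) • ρ)
      - ρ).PosSemidef ∧
    QSharp α ρ σ ≤ opNorm (σ.rpowH (-(1/2)) * ρ * σ.rpowH (-(1/2))) ^ (α-1) * ρ.trace.re ∧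
    -- (ii) the infimum is attained at some A with A ≤ ‖σ^(−1/2) ρ σ^(−1/2)‖_∞^(α−1) · tr(ρ) · I
    ∃ A : Matrix n n ℂ, A.PosSemidef ∧
      (Matrix.gmean (1/α) σ A - ρ).PosSemidef ∧
      A.trace.re = QSharp α ρ σ ∧
      ((((opNorm (σ.rpowH (-(1/2)) * ρ * σ.rpowH (-(1/2))) ^ (α-1) * ρ.trace.re : ℝ)) : ℂ)
          • (1 : Matrix n n ℂ) - A).PosSemidef := by
  simp only [Complex.coe_smul]
  have hA₀ := QSharp.opNorm_rpow_smul_mem_feasibleSet (nonneg_iff_posSemidef.2 hρ) hσ hα.le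
  have htrace : QSharp α ρ σ ≤
      opNorm (σ.rpowH (-(1 / 2)) * ρ * σ.rpowH (-(1 / 2))) ^ (α - 1) * ρ.trace.re := by
    simpa [trace_smul] using QSharp.le_re_trace hA₀
  obtain ⟨A, hA, hAtrace⟩ := QSharp.exists_mem_feasibleSet_re_trace_eq
    (nonneg_iff_posSemidef.2 hσ.posSemidef) (zero_le_one.trans hα.le) ⟨_, hA₀⟩
  refine ⟨hA₀.2, htrace, A, nonneg_iff_posSemidef.1 hA.1, hA.2, hAtrace, ?_⟩
  calc A ≤ A.trace.re • (1 : Matrix n n ℂ) := le_re_trace_smul_one hA.1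
    _ ≤ _ := smul_le_smul_of_nonneg_right (hAtrace.trans_le htrace) zero_le_one
end

section
/- Let α ∈ (1,∞), let ρ be a positive semidefinite n×n complex matrix and σ a positive definite n×n complex matrix, and let Φ be a positive, trace-preserving linear map from n×n to m×m complex matrices (Φ maps PSD matrices to PSD matrices and tr(Φ(W)) = tr(W) for all W) such that Φ(σ) is positive definite. Then Q^#_α(Φ(ρ)‖Φ(σ)) ≤ Q^#_α(ρ‖σ), and hence D^#_α(Φ(ρ)‖Φ(σ)) ≤ D^#_α(ρ‖σ) (data-processing inequality). -/
open Matrix Filter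
open scoped Kronecker Classical ComplexOrder

/-!
If `E i` are positive with sum `1` and `M` is the inverse of `∑ i, c i • E i`, then positivity of
`∑ i, (c i)⁻¹ • (1 - c i • M) * E i * (1 - c i • M)` says that `M ≤ ∑ i, (c i)⁻¹ • E i`. Since
`x ^ p` is for `p ∈ (0, 1)` a superposition of resolvents, this gives Jensen's inequality
`∑ i, l i ^ p • E i ≤ (∑ i, l i • E i) ^ p`. Applied to the images of the spectral projections of
`A`, it becomes the Davis–Choi inequality `Φ (A ^ p) ≤ Φ A ^ p` for unital positive `Φ`. Following
Ando, normalising an arbitrary positive `Φ` to `Φ(S)^(-1/2) Φ(S^(1/2) · S^(1/2)) Φ(S)^(-1/2)` turns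
this into `Φ (S #_β T) ≤ Φ S #_β Φ T`. Hence `Φ` maps feasible points of the infimum defining
`Q^#_α(ρ‖σ)` to feasible points of the one defining `Q^#_α(Φ ρ‖Φ σ)`.

To take logarithms one needs `Q^#_α > 0`. The same inequality for `Φ = tr` gives
`Q^#_α(ρ‖σ) ≥ (tr ρ)^α / (tr σ)^(α - 1)`, which is positive unless `ρ = 0`.
-/

open Set MeasureTheory Ring
open scoped NNReal MatrixOrder Matrix.Norms.L2Operator

section Jensen

variable {A ι : Type*} [CStarAlgebra A] [PartialOrder A] [StarOrderedRing A] [Fintype ι]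
  {E : ι → A}

lemma ringInverse_sum_smul_le (hE : ∀ i, 0 ≤ E i) (hE₁ : ∑ i, E i = 1) {c : ι → ℝ}
    (hc : ∀ i, 0 < c i) : (∑ i, c i • E i)⁻¹ʳ ≤ ∑ i, (c i)⁻¹ • E i := by
  have hcE (i : ι) : 0 ≤ c i • E i := smul_nonneg (hc i).le (hE i)
  by_cases hs : IsUnit (∑ i, c i • E i)
  · set M := (∑ i, c i • E i)⁻¹ʳ with hM
    have hM₁ : M * ∑ i, c i • E i = 1 := Ring.inverse_mul_cancel _ hs
    have hM_star : star M = M := by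
      rw [hM, ← Ring.inverse_star, (Finset.sum_nonneg fun i _ ↦ hcE i).isSelfAdjoint.star_eq]
    have hterm (i : ι) : (c i)⁻¹ • (star (1 - c i • M) * E i * (1 - c i • M)) =
        (c i)⁻¹ • E i - E i * M - M * E i + M * (c i • E i) * M := by
      simp only [star_sub, star_one, star_smul, star_trivial, hM_star, sub_mul, mul_sub, one_mul,
        mul_one, smul_mul_assoc, mul_smul_comm, smul_sub, smul_smul, inv_mul_cancel₀ (hc i).ne',
        inv_mul_cancel_left₀ (hc i).ne', one_smul]
      abel
    have hsum : ∑ i, (c i)⁻¹ • (star (1 - c i • M) * E i * (1 - c i • M)) =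
        ∑ i, (c i)⁻¹ • E i - M := by
      simp only [hterm, Finset.sum_add_distrib, Finset.sum_sub_distrib, ← Finset.sum_mul,
        ← Finset.mul_sum, hE₁, hM₁, one_mul, mul_one]
      abel
    rw [← sub_nonneg, ← hsum]
    exact Finset.sum_nonneg fun i _ ↦
      smul_nonneg (inv_nonneg.mpr (hc i).le) (star_left_conjugate_nonneg (hE i) _)
  · rw [Ring.inverse_non_unit _ hs]
    exact Finset.sum_nonneg fun i _ ↦ smul_nonneg (inv_nonneg.mpr (hc i).le) (hE i)

lemma cfc_rpowIntegrand₀₁_eq_sub_ringInverse {p t : ℝ} (hp : p ≠ 1) (ht : 0 < t) {a : A}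
    (ha : 0 ≤ a) :
    cfc (Real.rpowIntegrand₀₁ p t) a =
      algebraMap ℝ A (t ^ (p - 1)) - t ^ p • (algebraMap ℝ A t + a)⁻¹ʳ := by
  have hspec : ∀ r ∈ spectrum ℝ a, t + r ≠ 0 := by grind
  have hcont : ContinuousOn (fun r : ℝ ↦ (t + r)⁻¹) (spectrum ℝ a) := by
    fun_prop (disch := assumption)
  rw [Real.rpowIntegrand₀₁_eq_sub hp ht,
    cfc_sub (fun _ ↦ t ^ (p - 1)) (fun r ↦ t ^ p * (t + r)⁻¹) a continuousOn_const
      (continuousOn_const.mul hcont), cfc_const _ a, cfc_const_mul _ _ a hcont,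
    cfc_inv _ _ hspec .., cfc_const_add .., cfc_id' ..]

lemma sum_rpowIntegrand₀₁_smul_le_cfc (hE : ∀ i, 0 ≤ E i) (hE₁ : ∑ i, E i = 1) {l : ι → ℝ}
    (hl : ∀ i, 0 ≤ l i) {p t : ℝ} (hp : p ≠ 1) (ht : 0 < t) :
    ∑ i, Real.rpowIntegrand₀₁ p t (l i) • E i ≤
      cfc (Real.rpowIntegrand₀₁ p t) (∑ i, l i • E i) := by
  have hsum (f : ι → ℝ) (r : ℝ) : ∑ i, (r + f i) • E i = algebraMap ℝ A r + ∑ i, f i • E i := by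
    simp only [add_smul, Finset.sum_add_distrib, ← Finset.smul_sum, hE₁,
      Algebra.algebraMap_eq_smul_one]
  have hres := ringInverse_sum_smul_le hE hE₁ fun i ↦ add_pos_of_pos_of_nonneg ht (hl i)
  rw [hsum] at hres
  rw [cfc_rpowIntegrand₀₁_eq_sub_ringInverse hp ht
    (Finset.sum_nonneg fun i _ ↦ smul_nonneg (hl i) (hE i))]
  calc ∑ i, Real.rpowIntegrand₀₁ p t (l i) • E i
      = ∑ i, (t ^ (p - 1) + - (t ^ p * (t + l i)⁻¹)) • E i := by
        simp only [Real.rpowIntegrand₀₁_eq_sub hp ht, sub_eq_add_neg]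
    _ = algebraMap ℝ A (t ^ (p - 1)) - t ^ p • ∑ i, (t + l i)⁻¹ • E i := by
        rw [hsum]
        simp only [neg_smul, Finset.sum_neg_distrib, mul_smul, Finset.smul_sum, sub_eq_add_neg]
    _ ≤ algebraMap ℝ A (t ^ (p - 1)) - t ^ p • (algebraMap ℝ A t + ∑ i, l i • E i)⁻¹ʳ := by
        gcongr

variable (A) in
lemma exists_measure_rpow_eq_integral_cfc_rpowIntegrand₀₁ {p : ℝ} (hp : p ∈ Ioo 0 1) :
    ∃ μ : Measure ℝ, ∀ a : A, 0 ≤ a →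
      IntegrableOn (fun t ↦ cfc (Real.rpowIntegrand₀₁ p t) a) (Ioi 0) μ ∧
        a ^ p = ∫ t in Ioi 0, cfc (Real.rpowIntegrand₀₁ p t) a ∂μ := by
  lift p to ℝ≥0 using hp.1.le
  have hp' : p ∈ Ioo 0 1 := by exact_mod_cast hp
  obtain ⟨μ, hμ⟩ := CFC.exists_measure_nnrpow_eq_integral_cfcₙ_rpowIntegrand₀₁ A hp'
  refine ⟨μ, fun a ha ↦ ?_⟩
  have hcfc : EqOn (fun t ↦ cfcₙ (Real.rpowIntegrand₀₁ p t) a)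
      (fun t ↦ cfc (Real.rpowIntegrand₀₁ p t) a) (Ioi 0) := fun t ht ↦
    cfcₙ_eq_cfc ((Real.continuousOn_rpowIntegrand₀₁_Ici hp ht).mono (by grind)) (by simp)
  rw [← CFC.nnrpow_eq_rpow hp'.1, ← integrableOn_congr_fun hcfc measurableSet_Ioi,
    ← setIntegral_congr_fun measurableSet_Ioi hcfc]
  exact hμ a ha

lemma sum_rpow_smul_le_rpow_sum (hE : ∀ i, 0 ≤ E i) (hE₁ : ∑ i, E i = 1) {l : ι → ℝ}
    (hl : ∀ i, 0 ≤ l i) {p : ℝ} (hp : p ∈ Ioo 0 1) :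
    ∑ i, l i ^ p • E i ≤ (∑ i, l i • E i) ^ p := by
  obtain ⟨μ, hμ⟩ := exists_measure_rpow_eq_integral_cfc_rpowIntegrand₀₁ A hp
  obtain ⟨hint, heq⟩ := hμ _ (Finset.sum_nonneg fun i _ ↦ smul_nonneg (hl i) (hE i))
  have hscalar (i : ι) :
      IntegrableOn (fun t ↦ Real.rpowIntegrand₀₁ p t (l i) • E i) (Ioi 0) μ ∧
        l i ^ p • E i = ∫ t in Ioi 0, Real.rpowIntegrand₀₁ p t (l i) • E i ∂μ := by
    obtain ⟨hint, heq⟩ := hμ (algebraMap ℝ A (l i)) (algebraMap_nonneg A (hl i))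
    have hpow : algebraMap ℝ A (l i) ^ p = algebraMap ℝ A (l i ^ p) := by
      rw [CFC.rpow_eq_cfc_real (ha := algebraMap_nonneg A (hl i)), cfc_algebraMap]
    simp only [cfc_algebraMap, hpow] at hint heq
    simp only [Algebra.smul_def]
    exact ⟨hint.mul_const _, by rw [heq, integral_mul_const_of_integrable hint]⟩
  calc ∑ i, l i ^ p • E i
      = ∫ t in Ioi 0, ∑ i, Real.rpowIntegrand₀₁ p t (l i) • E i ∂μ := by
        rw [integral_finsetSum _ fun i _ ↦ (hscalar i).1]
        exact Finset.sum_congr rfl fun i _ ↦ (hscalar i).2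
    _ ≤ ∫ t in Ioi 0, cfc (Real.rpowIntegrand₀₁ p t) (∑ i, l i • E i) ∂μ :=
        setIntegral_mono_on (integrable_finsetSum _ fun i _ ↦ (hscalar i).1) hint measurableSet_Ioi
          fun t ht ↦ sum_rpowIntegrand₀₁_smul_le_cfc hE hE₁ hl hp.2.ne ht
    _ = (∑ i, l i • E i) ^ p := heq.symm

end Jensen

section PositiveMap

variable {n B : Type*} [Fintype n] [DecidableEq n] [CStarAlgebra B] [PartialOrder B]
  [StarOrderedRing B]

lemma exists_cfc_eq_sum_eigenvalues_smul {A : Matrix n n ℂ} (hA : A.IsHermitian) :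
    ∃ E : n → Matrix n n ℂ, (∀ i, 0 ≤ E i) ∧ ∑ i, E i = 1 ∧
      ∀ f : ℝ → ℝ, cfc f A = ∑ i, f (hA.eigenvalues i) • E i := by
  let U : Matrix n n ℂ := hA.eigenvectorUnitary
  let E (i : n) : Matrix n n ℂ := U * single i i 1 * star U
  have hcfc (f : ℝ → ℝ) : cfc f A = ∑ i, f (hA.eigenvalues i) • E i := by
    rw [hA.cfc_eq, IsHermitian.cfc, Unitary.conjStarAlgAut_apply, ← sum_single_eq_diagonal,
      Finset.mul_sum, Finset.sum_mul]
    refine Finset.sum_congr rfl fun i _ ↦ ?_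
    have hsingle : single i i (f (hA.eigenvalues i) : ℂ) = f (hA.eigenvalues i) • single i i 1 := by
      simp [smul_single]
    rw [← smul_mul_assoc, ← mul_smul_comm, ← hsingle]
    rfl
  refine ⟨E, fun i ↦ star_right_conjugate_nonneg ?_ U, ?_, hcfc⟩
  · rw [nonneg_iff_posSemidef, ← diagonal_single]
    exact .diagonal (Pi.single_nonneg.mpr zero_le_one)
  · simpa [cfc_const_one ℝ A] using (hcfc fun _ ↦ 1).symm

lemma map_rpow_le_rpow_map (Φ : Matrix n n ℂ →ₚ[ℝ] B) (hΦ : Φ 1 = 1) {A : Matrix n n ℂ}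
    (hA : 0 ≤ A) {p : ℝ} (hp : p ∈ Ioo 0 1) : Φ (A ^ p) ≤ Φ A ^ p := by
  have hA_herm := hA.posSemidef.isHermitian
  obtain ⟨E, hE, hE₁, hcfc⟩ := exists_cfc_eq_sum_eigenvalues_smul hA_herm
  have hΦE₁ : ∑ i, Φ (E i) = 1 := by rw [← map_sum, hE₁, hΦ]
  calc Φ (A ^ p)
      = ∑ i, hA_herm.eigenvalues i ^ p • Φ (E i) := by
        rw [CFC.rpow_eq_cfc_real, hcfc]
        simp only [map_sum, map_smul]
    _ ≤ (∑ i, hA_herm.eigenvalues i • Φ (E i)) ^ p :=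
        sum_rpow_smul_le_rpow_sum (fun i ↦ map_nonneg Φ (hE i)) hΦE₁
          hA.posSemidef.eigenvalues_nonneg hp
    _ = Φ (cfc (fun x : ℝ ↦ x) A) ^ p := by simp only [hcfc, map_sum, map_smul]
    _ = Φ A ^ p := by rw [cfc_id' ℝ A]

end PositiveMap

section GeometricMean

variable {A n : Type*} [CStarAlgebra A] [PartialOrder A] [StarOrderedRing A] [Fintype n]
  [DecidableEq n] {s a : A} {β : ℝ}

/-- The `β`-weighted geometric mean `s #_β a` of a strictly positive `s` and a nonnegative `a`. It
is defined in any C⋆-algebra, and not just for matrices, so that the trace, a positive map into `ℂ`,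
is covered by `map_geometricMean_le`. -/
noncomputable def geometricMean (β : ℝ) (s a : A) : A :=
  CFC.conjSqrt s (CFC.conjSqrt s⁻¹ʳ a ^ β)

lemma conjSqrt_nonneg (s : A) (ha : 0 ≤ a) : 0 ≤ CFC.conjSqrt s a := by
  simpa using CFC.conjSqrt_le_conjSqrt (c := s) ha

lemma geometricMean_nonneg (β : ℝ) (s a : A) : 0 ≤ geometricMean β s a :=
  conjSqrt_nonneg s CFC.rpow_nonneg

lemma geometricMean_inv_geometricMean (hs : IsStrictlyPositive s) (ha : 0 ≤ a) (hβ : 0 < β) :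
    geometricMean β⁻¹ s (geometricMean β s a) = a := by
  rw [geometricMean, geometricMean, CFC.conjSqrt_ringInverse_conjSqrt s _,
    CFC.rpow_rpow_of_exponent_nonneg _ _ _ hβ.le (inv_nonneg.mpr hβ.le)
      (ha := conjSqrt_nonneg _ ha), mul_inv_cancel₀ hβ.ne',
    CFC.rpow_one _ (conjSqrt_nonneg _ ha), CFC.conjSqrt_conjSqrt_ringInverse s a]

lemma geometricMean_algebraMap {s a : ℝ≥0} (hs : s ≠ 0) :
    geometricMean β (algebraMap ℝ≥0 A s) (algebraMap ℝ≥0 A a) =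
      algebraMap ℝ≥0 A (s ^ (1 - β) * a ^ β) := by
  have hinv : (algebraMap ℝ≥0 A s)⁻¹ʳ = algebraMap ℝ≥0 A s⁻¹ :=
    Ring.inverse_unit (Units.map (algebraMap ℝ≥0 A : ℝ≥0 →* A) (Units.mk0 s hs))
  have hconj (x y : ℝ≥0) :
      CFC.conjSqrt (algebraMap ℝ≥0 A x) (algebraMap ℝ≥0 A y) = algebraMap ℝ≥0 A (x * y) := by
    rw [CFC.conjSqrt_apply, CFC.sqrt_algebraMap, ← map_mul, ← map_mul, mul_right_comm,
      NNReal.mul_self_sqrt]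
  rw [geometricMean, hinv, hconj, CFC.rpow_algebraMap, hconj, NNReal.mul_rpow, NNReal.inv_rpow,
    NNReal.rpow_sub hs, NNReal.rpow_one, div_eq_mul_inv, mul_assoc]

lemma map_geometricMean_le (Φ : Matrix n n ℂ →ₚ[ℝ] A) {S T : Matrix n n ℂ}
    (hS : IsStrictlyPositive S) (hΦS : IsStrictlyPositive (Φ S)) (hT : 0 ≤ T) (hβ : β ∈ Ioo 0 1) :
    Φ (geometricMean β S T) ≤ geometricMean β (Φ S) (Φ T) := by
  let Ψ : Matrix n n ℂ →ₚ[ℝ] A :=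
    .mk₀ (CFC.conjSqrt (Φ S)⁻¹ʳ ∘ₗ Φ.toLinearMap ∘ₗ CFC.conjSqrt S) fun X hX ↦
      conjSqrt_nonneg _ (map_nonneg Φ (conjSqrt_nonneg S hX))
  have hΨ (X : Matrix n n ℂ) : Ψ X = CFC.conjSqrt (Φ S)⁻¹ʳ (Φ (CFC.conjSqrt S X)) := rfl
  have hΨ₁ : Ψ 1 = 1 := by rw [hΨ, CFC.conjSqrt_one S, CFC.conjSqrt_ringInverse_self (Φ S)]
  have h := map_rpow_le_rpow_map Ψ hΨ₁ (conjSqrt_nonneg S⁻¹ʳ hT) hβ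
  rw [hΨ, hΨ, CFC.conjSqrt_conjSqrt_ringInverse S] at h
  calc Φ (geometricMean β S T)
      = CFC.conjSqrt (Φ S) (CFC.conjSqrt (Φ S)⁻¹ʳ (Φ (geometricMean β S T))) :=
        (CFC.conjSqrt_conjSqrt_ringInverse (Φ S) _).symm
    _ ≤ geometricMean β (Φ S) (Φ T) := CFC.conjSqrt_le_conjSqrt h

lemma rpowH_eq_rpow_s4 {X : Matrix n n ℂ} (hX : 0 ≤ X) (r : ℝ) : X.rpowH r = X ^ r := by
  have hX' := (nonneg_iff_posSemidef.mp hX).isHermitian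
  rw [CFC.rpow_eq_cfc_real, hX'.cfc_eq, IsHermitian.cfc, rpowH, dif_pos hX',
    Unitary.conjStarAlgAut_apply]
  rfl

lemma gmean_eq_geometricMean {S T : Matrix n n ℂ} (hS : S.PosDef) (hT : 0 ≤ T) (β : ℝ) :
    S.gmean β T = geometricMean β S T := by
  have hS' := hS.isStrictlyPositive
  have hsqrt : CFC.sqrt S⁻¹ʳ = S.rpowH (-(1 / 2)) := by
    rw [rpowH_eq_rpow_s4 hS'.nonneg, CFC.sqrt_ringInverse, CFC.sqrt_eq_rpow,
      CFC.inverse_rpow _ _ (by norm_num)]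
  have hconj : CFC.conjSqrt S⁻¹ʳ T = S.rpowH (-(1 / 2)) * T * S.rpowH (-(1 / 2)) := by
    rw [CFC.conjSqrt_apply, hsqrt]
  rw [gmean, geometricMean, ← hconj, rpowH_eq_rpow_s4 (conjSqrt_nonneg _ hT),
    CFC.conjSqrt_apply (c := S), CFC.sqrt_eq_rpow (a := S), rpowH_eq_rpow_s4 hS'.nonneg]

lemma trace_re_geometricMean_le [Nonempty n] {S T : Matrix n n ℂ} (hS : S.PosDef) (hT : 0 ≤ T)
    (hβ : β ∈ Ioo 0 1) :
    (geometricMean β S T).trace.re ≤ S.trace.re ^ (1 - β) * T.trace.re ^ β := by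
  have htrace {X : Matrix n n ℂ} (hX : 0 ≤ X) : ∃ x : ℝ≥0, X.trace = algebraMap ℝ≥0 ℂ x := by
    obtain ⟨x, hx, hxX⟩ := RCLike.nonneg_iff_exists_ofReal.mp hX.posSemidef.trace_nonneg
    exact ⟨⟨x, hx⟩, hxX.symm⟩
  have hre (x : ℝ≥0) : (algebraMap ℝ≥0 ℂ x).re = x := rfl
  obtain ⟨s, hs⟩ := htrace hS.posSemidef.nonneg
  obtain ⟨t, ht⟩ := htrace hT
  have htr_pos : 0 < S.trace := hS.trace_pos
  have hs₀ : s ≠ 0 := by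
    rintro rfl
    exact htr_pos.ne' (hs.trans (map_zero _))
  have h := map_geometricMean_le (tracePositiveLinearMap n ℝ ℂ) hS.isStrictlyPositive
    (IsUnit.isStrictlyPositive htr_pos.ne'.isUnit htr_pos.le) hT hβ
  simp only [tracePositiveLinearMap_apply, hs, ht, geometricMean_algebraMap hs₀] at h
  simpa only [hs, ht, hre, NNReal.coe_mul, NNReal.coe_rpow] using Complex.re_le_re h

end GeometricMean

section QSharp

variable {n m : Type*} [Fintype n] [Fintype m] {α : ℝ} {ρ σ X : Matrix n n ℂ}

lemma trace_re_nonneg (hX : 0 ≤ X) : 0 ≤ X.trace.re :=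
  Complex.re_le_re hX.posSemidef.trace_nonneg

variable [DecidableEq n] [DecidableEq m]

/-- The feasible set of the infimum defining `Q^#_α(ρ‖σ)`, written with the Loewner order and
`geometricMean`. -/
def qSharpFeasible (α : ℝ) (ρ σ : Matrix n n ℂ) : Set (Matrix n n ℂ) :=
  {X | 0 ≤ X ∧ ρ ≤ geometricMean α⁻¹ σ X}

lemma QSharp_eq_sInf_image (α : ℝ) (ρ : Matrix n n ℂ) (hσ : σ.PosDef) :
    QSharp α ρ σ = sInf ((fun X ↦ X.trace.re) '' qSharpFeasible α ρ σ) := by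
  unfold QSharp
  congr 1
  ext t
  constructor
  · rintro ⟨X, hX, hρX, rfl⟩
    rw [← le_iff, gmean_eq_geometricMean hσ hX.nonneg, one_div] at hρX
    exact ⟨X, ⟨hX.nonneg, hρX⟩, rfl⟩
  · rintro ⟨X, ⟨hX, hρX⟩, rfl⟩
    rw [← one_div, ← gmean_eq_geometricMean hσ hX] at hρX
    exact ⟨X, hX.posSemidef, hρX, rfl⟩

lemma QSharp_le_trace_re (hσ : σ.PosDef) (hX : X ∈ qSharpFeasible α ρ σ) :
    QSharp α ρ σ ≤ X.trace.re := by
  rw [QSharp_eq_sInf_image α ρ hσ]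
  refine csInf_le ⟨0, ?_⟩ (mem_image_of_mem _ hX)
  rintro _ ⟨Y, hY, rfl⟩
  exact trace_re_nonneg hY.1

lemma geometricMean_mem_qSharpFeasible (hα : 0 < α) (hρ : 0 ≤ ρ) (hσ : σ.PosDef) :
    geometricMean α σ ρ ∈ qSharpFeasible α ρ σ :=
  ⟨geometricMean_nonneg α σ ρ,
    (geometricMean_inv_geometricMean hσ.isStrictlyPositive hρ hα).ge⟩

lemma le_QSharp (hα : 0 < α) (hρ : 0 ≤ ρ) (hσ : σ.PosDef) {q : ℝ}
    (h : ∀ X ∈ qSharpFeasible α ρ σ, q ≤ X.trace.re) : q ≤ QSharp α ρ σ := by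
  rw [QSharp_eq_sInf_image α ρ hσ]
  exact le_csInf (.image _ ⟨_, geometricMean_mem_qSharpFeasible hα hρ hσ⟩) (forall_mem_image.mpr h)

lemma QSharp_zero_left (hα : 0 < α) (hσ : σ.PosDef) : QSharp α 0 σ = 0 := by
  refine le_antisymm ?_ (le_QSharp hα le_rfl hσ fun X hX ↦ trace_re_nonneg hX.1)
  simpa using QSharp_le_trace_re hσ (X := 0) ⟨le_rfl, geometricMean_nonneg α⁻¹ σ 0⟩

lemma trace_rpow_div_le_QSharp [Nonempty n] (hα : 1 < α) (hρ : 0 ≤ ρ) (hσ : σ.PosDef) :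
    ρ.trace.re ^ α / σ.trace.re ^ (α - 1) ≤ QSharp α ρ σ := by
  have hα₀ : 0 < α := zero_lt_one.trans hα
  refine le_QSharp hα₀ hρ hσ fun X ⟨hX, hρX⟩ ↦ ?_
  have hσ_tr : 0 < σ.trace.re := (Complex.pos_iff.mp hσ.trace_pos).1
  have hX_tr := trace_re_nonneg hX
  have hle : ρ.trace.re ≤ σ.trace.re ^ (1 - α⁻¹) * X.trace.re ^ α⁻¹ :=
    (Complex.re_le_re (OrderHomClass.mono (tracePositiveLinearMap n ℝ ℂ) hρX)).trans
      (trace_re_geometricMean_le hσ hX ⟨inv_pos.mpr hα₀, inv_lt_one_of_one_lt₀ hα⟩)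
  rw [div_le_iff₀' (Real.rpow_pos_of_pos hσ_tr _)]
  calc ρ.trace.re ^ α
      ≤ (σ.trace.re ^ (1 - α⁻¹) * X.trace.re ^ α⁻¹) ^ α :=
        Real.rpow_le_rpow (trace_re_nonneg hρ) hle hα₀.le
    _ = σ.trace.re ^ (α - 1) * X.trace.re := by
        rw [Real.mul_rpow (by positivity) (by positivity), ← Real.rpow_mul hσ_tr.le,
          Real.rpow_inv_rpow hX_tr hα₀.ne', sub_mul, one_mul, inv_mul_cancel₀ hα₀.ne']

lemma QSharp_pos (hα : 1 < α) (hρ : 0 ≤ ρ) (hρ₀ : ρ ≠ 0) (hσ : σ.PosDef) : 0 < QSharp α ρ σ := by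
  have : Nonempty n := by
    by_contra! h
    exact hρ₀ (Subsingleton.elim _ _)
  have hρ_tr : 0 < ρ.trace.re :=
    (trace_re_nonneg hρ).lt_of_ne' fun h ↦ hρ₀ <| hρ.posSemidef.trace_eq_zero_iff.mp <|
      Complex.ext h (Complex.nonneg_iff.mp hρ.posSemidef.trace_nonneg).2.symm
  have hσ_tr : 0 < σ.trace.re := (Complex.pos_iff.mp hσ.trace_pos).1
  exact (by positivity : 0 < ρ.trace.re ^ α / σ.trace.re ^ (α - 1)).trans_le
    (trace_rpow_div_le_QSharp hα hρ hσ)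

lemma map_mem_qSharpFeasible (hα : 1 < α) (hσ : σ.PosDef) (Φ : Matrix n n ℂ →ₚ[ℝ] Matrix m m ℂ)
    (hΦσ : (Φ σ).PosDef) (hX : X ∈ qSharpFeasible α ρ σ) :
    Φ X ∈ qSharpFeasible α (Φ ρ) (Φ σ) :=
  ⟨map_nonneg Φ hX.1, (OrderHomClass.mono Φ hX.2).trans <|
    map_geometricMean_le Φ hσ.isStrictlyPositive hΦσ.isStrictlyPositive hX.1
      ⟨inv_pos.mpr (zero_lt_one.trans hα), inv_lt_one_of_one_lt₀ hα⟩⟩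

theorem QSharp_data_processing_general (hα : 1 < α) (hρ : ρ.PosSemidef) (hσ : σ.PosDef)
    (Φ : Matrix n n ℂ →ₚ[ℝ] Matrix m m ℂ) (hΦtr : ∀ X, 0 ≤ X → (Φ X).trace ≤ X.trace)
    (hΦσ : (Φ σ).PosDef) :
    QSharp α (Φ ρ) (Φ σ) ≤ QSharp α ρ σ ∧
      ((Φ ρ = 0 → ρ = 0) → DSharp α (Φ ρ) (Φ σ) ≤ DSharp α ρ σ) := by
  have hα₀ : 0 < α := zero_lt_one.trans hα
  have hQ : QSharp α (Φ ρ) (Φ σ) ≤ QSharp α ρ σ := le_QSharp hα₀ hρ.nonneg hσ fun X hX ↦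
    (QSharp_le_trace_re hΦσ (map_mem_qSharpFeasible hα hσ Φ hΦσ hX)).trans
      (Complex.re_le_re (hΦtr X hX.1))
  refine ⟨hQ, fun hΦρ ↦ mul_le_mul_of_nonneg_left ?_ (one_div_nonneg.mpr (sub_pos.mpr hα).le)⟩
  obtain rfl | hρ₀ := eq_or_ne ρ 0
  · rw [map_zero, QSharp_zero_left hα₀ hσ, QSharp_zero_left hα₀ hΦσ]
  · exact Real.logb_le_logb_of_le one_lt_two
      (QSharp_pos hα (map_nonneg Φ hρ.nonneg) (mt hΦρ hρ₀) hΦσ) hQ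

end QSharp

/-- data-processing inequality for Q^#_α and D^#_α under positive
trace-preserving linear maps. -/
theorem QSharp_data_processing
    {n m : Type*} [Fintype n] [DecidableEq n] [Fintype m] [DecidableEq m]
    (α : ℝ) (hα : 1 < α)
    (ρ σ : Matrix n n ℂ) (hρ : ρ.PosSemidef) (hσ : σ.PosDef)
    (Φ : Matrix n n ℂ →ₗ[ℂ] Matrix m m ℂ)
    (hΦpos : ∀ C : Matrix n n ℂ, C.PosSemidef → (Φ C).PosSemidef)
    (hΦtp : ∀ W : Matrix n n ℂ, (Φ W).trace = W.trace)
    (hΦσ : (Φ σ).PosDef) :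
    QSharp α (Φ ρ) (Φ σ) ≤ QSharp α ρ σ ∧
    DSharp α (Φ ρ) (Φ σ) ≤ DSharp α ρ σ := by
  have h := QSharp_data_processing_general hα hρ hσ
    (.mk₀ (Φ.restrictScalars ℝ) fun X hX ↦ (hΦpos X hX.posSemidef).nonneg)
    (fun X _ ↦ (hΦtp X).le) hΦσ
  refine ⟨h.1, h.2 fun hΦρ ↦ hρ.trace_eq_zero_iff.mp ?_⟩
  rw [← hΦtp, show Φ ρ = 0 from hΦρ, trace_zero]
end
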